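/- (Sawtooth Lemma, small-gap case.) For every t ∈ ℕ and all x, y ≥ 0 with |x − y| ≤ 2^{t−1}, (1/4)·∫₀⁴ ∫₀¹ |g_t(β·x + α·2^{t+1}) − g_t(β·y + α·2^{t+1})| dα dβ ≥ (2/3)·|x − y|. -/

import Mathlib

open MeasureTheory

/-- The sawtooth function `g_t(x) = 2^t - |x - (⌊x/2^{t+1}⌋·2^{t+1} + 2^t)|`. -/
noncomputable def sawtooth (t : ℕ) (x : ℝ) : ℝ :=
  2 ^ t - |x - ((⌊x / 2 ^ (t + 1)⌋ : ℝ) * 2 ^ (t + 1) + 2 ^ t)|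

/-!
The sawtooth `g_t` is the norm on the circle of length `T = 2 ^ (t + 1)`, where any two points
satisfy `|‖a‖ - ‖b‖| = min ‖a + b‖ ‖a - b‖`. For `a = u + βx` and `b = u + βy` the second term is
constant in `u`, while `a + b = 2u + β(x + y)` is uniformly distributed on the circle when `u` is.
Hence the gap has mean `d (T - d) / T` over `u`, with `d = ‖β(x - y)‖`. As long as `β|x - y| ≤ T`,
the norm `d` may be replaced by `β|x - y|`, and averaging over `β ∈ [0, B]` gives
`B|x - y| / 2 - (B|x - y|)² / (3T) ≥ B|x - y| / 6`.
-/

theorem intervalIntegral_comp_abs {E : Type*} [NormedAddCommGroup E] [NormedSpace ℝ E]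
    {f : ℝ → E} {h : ℝ} (hh : 0 ≤ h) (hf : IntervalIntegrable f volume 0 h) :
    ∫ v in -h..h, f |v| = (2 : ℝ) • ∫ v in 0..h, f v := by
  have eqOn : Set.EqOn f (fun v => f |v|) (Set.uIcc 0 h) := fun v hv =>
    congrArg f (abs_of_nonneg (Set.uIcc_of_le hh ▸ hv).1).symm
  have integrable_right : IntervalIntegrable (fun v => f |v|) volume 0 h :=
    IntervalIntegrable.congr (eqOn.mono Set.uIoc_subset_uIcc) hf
  have integrable_left : IntervalIntegrable (fun v => f |v|) volume (-h) 0 := by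
    simpa using integrable_right.symm.comp_sub_left 0
  have integral_left : ∫ v in -h..0, f |v| = ∫ v in 0..h, f |v| := by
    simpa using (intervalIntegral.integral_comp_neg (a := 0) (b := h) fun v => f |v|).symm
  rw [← intervalIntegral.integral_add_adjacent_intervals integrable_left integrable_right,
    integral_left, ← intervalIntegral.integral_congr eqOn, two_smul]

theorem integral_min_const {c h : ℝ} (hc : 0 ≤ c) (hch : c ≤ h) :
    ∫ v in 0..h, min v c = c * h - c ^ 2 / 2 := by
  have hmin : Continuous fun v : ℝ => min v c := by fun_prop
  calc ∫ v in 0..h, min v c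
    _ = (∫ v in 0..c, min v c) + ∫ v in c..h, min v c :=
        (intervalIntegral.integral_add_adjacent_intervals
          (hmin.intervalIntegrable _ _) (hmin.intervalIntegrable _ _)).symm
    _ = (∫ v in 0..c, v) + ∫ _ in c..h, c := by
        congr 1 <;> refine intervalIntegral.integral_congr fun v hv => ?_
        · exact min_eq_left (Set.uIcc_of_le hc ▸ hv).2
        · exact min_eq_right (Set.uIcc_of_le hch ▸ hv).1
    _ = c * h - c ^ 2 / 2 := by
        rw [integral_id, intervalIntegral.integral_const, smul_eq_mul]
        ring

section AddCircle

variable {T : ℝ}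

theorem addCircle_coe_norm_eq_or_eq_neg (a : AddCircle T) :
    (‖a‖ : AddCircle T) = a ∨ (‖a‖ : AddCircle T) = -a := by
  induction a using QuotientAddGroup.induction_on with | H x =>
  have coe_sub_period (n : ℤ) : ((x - n * T : ℝ) : AddCircle T) = x := by
    rw [← zsmul_eq_mul, AddCircle.coe_sub, AddCircle.coe_zsmul, AddCircle.coe_period, smul_zero,
      sub_zero]
  rw [AddCircle.norm_eq]
  rcases abs_choice (x - round (T⁻¹ * x) * T) with h | h
  · exact .inl (by rw [h, coe_sub_period])
  · exact .inr (by rw [h, AddCircle.coe_neg, coe_sub_period])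

theorem addCircle_abs_norm_sub_norm_eq_min (a b : AddCircle T) :
    |‖a‖ - ‖b‖| = min ‖a + b‖ ‖a - b‖ := by
  refine le_antisymm (le_min ?_ (abs_norm_sub_norm_le a b)) ?_
  · simpa using abs_norm_sub_norm_le a (-b)
  -- Up to sign, `a` and `b` are the images of `‖a‖` and `‖b‖`, so one of `a ± b` is, up to sign,
  -- the image of the real number `‖a‖ - ‖b‖`.
  have norm_coe_le : ‖(‖a‖ : AddCircle T) - ‖b‖‖ ≤ |‖a‖ - ‖b‖| :=
    QuotientAddGroup.norm_mk_le_norm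
  refine le_trans ?_ norm_coe_le
  rcases addCircle_coe_norm_eq_or_eq_neg a with ha | ha <;>
    rcases addCircle_coe_norm_eq_or_eq_neg b with hb | hb <;> rw [ha, hb]
  · exact min_le_right _ _
  · exact (min_le_left _ _).trans_eq (by rw [sub_neg_eq_add])
  · exact (min_le_left _ _).trans_eq (by rw [← norm_neg, neg_add'])
  · exact (min_le_right _ _).trans_eq (by rw [neg_sub_neg, norm_sub_rev])

theorem addCircle_norm_coe_eq_min_of_abs_le {x : ℝ} (hx : |x| ≤ T) :
    ‖(x : AddCircle T)‖ = min |x| (T - |x|) := by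
  rcases ((abs_nonneg x).trans hx).eq_or_lt with rfl | hT
  · simp [abs_nonpos_iff.mp hx]
  have norm_eq_abs {y : ℝ} (hy : |y| ≤ T / 2) : ‖(y : AddCircle T)‖ = |y| :=
    (AddCircle.norm_coe_eq_abs_iff T hT.ne').mpr (by rwa [abs_of_pos hT])
  rcases le_total |x| (T / 2) with h | h
  · rw [norm_eq_abs h, min_eq_left (by linarith)]
  · have abs_sub_period : |(|x| - T)| = T - |x| := by
      rw [abs_sub_comm, abs_of_nonneg (by linarith)]
    have norm_eq_norm_sub_period : ‖(x : AddCircle T)‖ = ‖((|x| - T : ℝ) : AddCircle T)‖ := by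
      rw [AddCircle.coe_sub, AddCircle.coe_period, sub_zero]
      rcases abs_choice x with hsign | hsign <;> simp [hsign]
    rw [norm_eq_norm_sub_period, norm_eq_abs (by linarith), abs_sub_period,
      min_eq_right (by linarith)]

theorem addCircle_norm_coe_mul_sub_of_abs_le {x : ℝ} (hx : |x| ≤ T) :
    ‖(x : AddCircle T)‖ * (T - ‖(x : AddCircle T)‖) = |x| * (T - |x|) := by
  rw [addCircle_norm_coe_eq_min_of_abs_le hx]
  rcases min_choice |x| (T - |x|) with h | h <;> rw [h]
  ring

variable [hT : Fact (0 < T)]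

theorem addCircle_integral_comp_norm {E : Type*} [NormedAddCommGroup E] [NormedSpace ℝ E]
    {f : ℝ → E} (hf : IntervalIntegrable f volume 0 (T / 2)) :
    ∫ u : AddCircle T, f ‖u‖ = (2 : ℝ) • ∫ v in 0..T / 2, f v := by
  rw [← intervalIntegral_comp_abs (half_pos hT.out).le hf,
    ← AddCircle.intervalIntegral_preimage T (-(T / 2)), show -(T / 2) + T = T / 2 by ring]
  refine intervalIntegral.integral_congr fun v hv => ?_
  rw [Set.uIcc_of_le (by linarith [hT.out])] at hv
  have norm_eq_abs : ‖(v : AddCircle T)‖ = |v| :=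
    (AddCircle.norm_coe_eq_abs_iff T hT.out.ne').mpr (by rwa [abs_of_pos hT.out, abs_le])
  simp only [norm_eq_abs]

theorem addCircle_integral_min_norm_const {c : ℝ} (hc : 0 ≤ c) (hcT : c ≤ T / 2) :
    ∫ u : AddCircle T, min ‖u‖ c = c * (T - c) := by
  rw [addCircle_integral_comp_norm (f := fun v => min v c)
    (Continuous.intervalIntegrable (by fun_prop) _ _), integral_min_const hc hcT, smul_eq_mul]
  ring

theorem addCircle_integral_abs_norm_add_sub_norm_add (a b : AddCircle T) :
    ∫ u : AddCircle T, |‖a + u‖ - ‖b + u‖| = ‖a - b‖ * (T - ‖a - b‖) := by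
  have doubling : MeasurePreserving (fun u : AddCircle T => 2 • u + (a + b)) :=
    (AddCircle.ergodic_nsmul_add (a + b) one_lt_two).toMeasurePreserving
  calc ∫ u : AddCircle T, |‖a + u‖ - ‖b + u‖|
    _ = ∫ u : AddCircle T, min ‖2 • u + (a + b)‖ ‖a - b‖ := by
        congr! 2 with u
        rw [addCircle_abs_norm_sub_norm_eq_min, add_sub_add_right_eq_sub, two_nsmul,
          add_add_add_comm, add_comm]
    _ = ∫ u : AddCircle T, min ‖u‖ ‖a - b‖ := by
        conv_rhs => rw [← doubling.map_eq]
        rw [integral_map doubling.aemeasurable (Continuous.aestronglyMeasurable (by fun_prop))]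
    _ = ‖a - b‖ * (T - ‖a - b‖) :=
        addCircle_integral_min_norm_const (norm_nonneg _)
          ((AddCircle.norm_le_half_period T hT.out.ne').trans_eq (by rw [abs_of_pos hT.out]))

theorem addCircle_intervalIntegral_comp_mul_period {E : Type*} [NormedAddCommGroup E]
    [NormedSpace ℝ E] (f : AddCircle T → E) :
    ∫ α in (0 : ℝ)..1, f ((α * T : ℝ) : AddCircle T) = T⁻¹ • ∫ u : AddCircle T, f u := by
  rw [intervalIntegral.integral_comp_mul_right (fun v : ℝ => f v) hT.out.ne',
    ← AddCircle.intervalIntegral_preimage T 0 f]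
  simp only [zero_mul, one_mul, zero_add]

end AddCircle

instance fact_two_pow_pos (n : ℕ) : Fact ((0 : ℝ) < 2 ^ n) :=
  ⟨by positivity⟩

theorem sawtooth_eq_norm (t : ℕ) (x : ℝ) :
    sawtooth t x = ‖(x : AddCircle ((2 : ℝ) ^ (t + 1)))‖ := by
  have hT : (0 : ℝ) < 2 ^ (t + 1) := by positivity
  have min_eq (r : ℝ) : min r (1 - r) = 1 / 2 - |r - 1 / 2| := by
    rcases le_total r (1 / 2) with h | h
    · rw [min_eq_left (by linarith), abs_of_nonpos (by linarith)]
      ring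
    · rw [min_eq_right (by linarith), abs_of_nonneg (by linarith)]
      ring
  have sub_center : x - (⌊x / 2 ^ (t + 1)⌋ * 2 ^ (t + 1) + 2 ^ t) =
      2 ^ (t + 1) * (Int.fract (x / 2 ^ (t + 1)) - 1 / 2) := by
    rw [Int.fract]
    field
  rw [AddCircle.norm_eq' _ hT, inv_mul_eq_div, abs_sub_round_eq_min, min_eq, sawtooth, sub_center,
    abs_mul, abs_of_pos hT]
  ring

theorem integral_abs_sawtooth_sub_sawtooth (t : ℕ) {a b : ℝ} (hab : |a - b| ≤ 2 ^ (t + 1)) :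
    ∫ α in (0 : ℝ)..1, |sawtooth t (a + α * 2 ^ (t + 1)) - sawtooth t (b + α * 2 ^ (t + 1))| =
      |a - b| - |a - b| ^ 2 / 2 ^ (t + 1) := by
  simp only [sawtooth_eq_norm, AddCircle.coe_add]
  rw [addCircle_intervalIntegral_comp_mul_period
      (fun u : AddCircle ((2 : ℝ) ^ (t + 1)) => |‖a + u‖ - ‖b + u‖|),
    addCircle_integral_abs_norm_add_sub_norm_add, ← AddCircle.coe_sub,
    addCircle_norm_coe_mul_sub_of_abs_le hab, smul_eq_mul]
  field

theorem average_abs_sawtooth_sub_sawtooth (t : ℕ) {B : ℝ} (hB : 0 < B) {x y : ℝ}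
    (hxy : B * |x - y| ≤ 2 ^ (t + 1)) :
    (1 / B) * ∫ β in (0 : ℝ)..B, ∫ α in (0 : ℝ)..1,
        |sawtooth t (β * x + α * 2 ^ (t + 1)) - sawtooth t (β * y + α * 2 ^ (t + 1))| =
      B * |x - y| / 2 - (B * |x - y|) ^ 2 / (3 * 2 ^ (t + 1)) := by
  have inner_eq : Set.EqOn
      (fun β => ∫ α in (0 : ℝ)..1,
        |sawtooth t (β * x + α * 2 ^ (t + 1)) - sawtooth t (β * y + α * 2 ^ (t + 1))|)
      (fun β => β * |x - y| - β ^ 2 * (|x - y| ^ 2 / 2 ^ (t + 1))) (Set.uIcc 0 B) := by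
    intro β hβ
    rw [Set.uIcc_of_le hB.le] at hβ
    have abs_sub_eq : |β * x - β * y| = β * |x - y| := by
      rw [← mul_sub, abs_mul, abs_of_nonneg hβ.1]
    have hβxy : |β * x - β * y| ≤ 2 ^ (t + 1) :=
      abs_sub_eq.trans_le ((mul_le_mul_of_nonneg_right hβ.2 (abs_nonneg _)).trans hxy)
    simp only [integral_abs_sawtooth_sub_sawtooth t hβxy, abs_sub_eq]
    ring
  rw [intervalIntegral.integral_congr inner_eq,
    intervalIntegral.integral_sub (Continuous.intervalIntegrable (by fun_prop) _ _)
      (Continuous.intervalIntegrable (by fun_prop) _ _),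
    intervalIntegral.integral_mul_const, intervalIntegral.integral_mul_const, integral_id,
    integral_pow]
  field

theorem sawtooth_expected_gap_small_general (t : ℕ) {B : ℝ} (hB : 0 < B) (x y : ℝ)
    (hxy : B * |x - y| ≤ 2 ^ (t + 1)) :
    (B / 6) * |x - y| ≤
      (1 / B) * ∫ β in (0 : ℝ)..B, ∫ α in (0 : ℝ)..1,
        |sawtooth t (β * x + α * 2 ^ (t + 1)) - sawtooth t (β * y + α * 2 ^ (t + 1))| := by
  rw [average_abs_sawtooth_sub_sawtooth t hB hxy]
  have sq_div_le : (B * |x - y|) ^ 2 / (3 * 2 ^ (t + 1)) ≤ B * |x - y| / 3 := by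
    rw [div_le_div_iff₀ (by positivity) (by positivity)]
    nlinarith [mul_le_mul_of_nonneg_left hxy (by positivity : 0 ≤ B * |x - y|)]
  linarith

/-- Sawtooth Lemma, small-gap case: if `|x - y| ≤ 2^{t-1}` then
`E_{α,β}[|g_{t,α,β}(x) - g_{t,α,β}(y)|] ≥ (2/3)·|x - y|`. -/
theorem sawtooth_expected_gap_small (t : ℕ) (x y : ℝ) (hx : 0 ≤ x) (hy : 0 ≤ y)
    (hxy : |x - y| ≤ 2 ^ t / 2) :
    (2 / 3) * |x - y| ≤
      (1 / 4) * ∫ β in (0:ℝ)..4, ∫ α in (0:ℝ)..1,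
        |sawtooth t (β * x + α * 2 ^ (t + 1)) - sawtooth t (β * y + α * 2 ^ (t + 1))| := by
  have hgap : 4 * |x - y| ≤ 2 ^ (t + 1) := by rw [pow_succ]; linarith
  convert! sawtooth_expected_gap_small_general t four_pos x y hgap using 2
  norm_num
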